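/- Let $\mathcal X$ be a standard Borel space (for example a separable, completely metrizable space with its Borel $\sigma$-algebra), and let $G$ be a group acting on $\mathcal X$ by measurable maps $x\mapsto gx$; extend the action componentwise to $\mathcal X^n$ and to sequences. Let $P$ and $Q$ be two probability laws of a process $X=(X_n)_{n\ge 1}$ with values in $\mathcal X$, and for $g\in G$ let $P_g$ and $Q_g$ be the laws, under $P$ and $Q$ respectively, of the process $(gX_n)_{n\ge 1}$. For each $n\ge 1$ let $m_n:\mathcal X^n\to\mathcal M_n$ be a maximal invariant with values in a standard Borel space $\mathcal M_n$, that is, a measurable map such that $m_n(gx)=m_n(x)$ for all $g\in G$, $x\in\mathcal X^n$, and such that $m_n(x)=m_n(y)$ implies $y=gx$ for some $g\in G$. Set $M_n:=m_n(X_1,\dots,X_n)$. By invariance, the distribution of $M_n$ is the same under every $P_g$ and the same under every $Q_g$; denote these distributions by $P^{M_n}$ and $Q^{M_n}$. Then: (i) for each $n\ge 2$, $M_{n-1}$ is a measurable function of $M_n$, that is, $M_{n-1}=f_n(M_n)$ for some measurable $f_n:\mathcal M_n\to\mathcal M_{n-1}$; (ii) if $Q^{M_n}\ll P^{M_n}$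 for every $n\ge 1$, then the process $$T^*_n:=\frac{dQ^{M_n}}{dP^{M_n}}(M_n),\qquad n\ge 1,$$ is, under every $P_g$, $g\in G$, a nonnegative martingale with respect to the filtration $\mathcal F_n:=\sigma(M_1,\dots,M_n)$, and $\int T^*_n\,dP_g=1$ for all $n\ge 1$. -/

import Mathlib

open MeasureTheory

/-- `m : 𝒳^ι → N` is a maximal invariant for the componentwise action of `G` on `𝒳^ι`:
it is measurable, constant on orbits, and takes different values on different orbits. -/
structure IsMaximalInvariant (G : Type*) [Group G] {𝒳 : Type*} [MeasurableSpace 𝒳] [MulAction G 𝒳]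
    {ι : Type*} {N : Type*} [MeasurableSpace N] (m : (ι → 𝒳) → N) : Prop where
  measurable : Measurable m
  invariant : ∀ (g : G) (x : ι → 𝒳), m (g • x) = m x
  maximal : ∀ x y : ι → 𝒳, m x = m y → ∃ g : G, y = g • x

/-- The law of the process obtained from a process with law `P` by applying `g` to every
component. -/
noncomputable def translatedLaw {G : Type*} [Group G] {𝒳 : Type*} [MeasurableSpace 𝒳]
    [MulAction G 𝒳] (P : Measure (ℕ → 𝒳)) (g : G) : Measure (ℕ → 𝒳) :=
  P.map fun ω => g • ω

/-- The statistic `m_k(X_1, …, X_k)` with `k = n + 1`, as a function of the whole trajectory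
`ω = (X_1, X_2, …) = (ω 0, ω 1, …)`. Sample sizes `k ≥ 1` are indexed by `n = k - 1`. -/
def invariantStat {𝒳 : Type*} {M : ℕ → Type*} (m : (n : ℕ) → (Fin (n + 1) → 𝒳) → M n) (n : ℕ)
    (ω : ℕ → 𝒳) : M n :=
  m n fun i => ω i

theorem measurable_invariantStat {𝒳 : Type*} [MeasurableSpace 𝒳] {M : ℕ → Type*}
    [∀ n, MeasurableSpace (M n)] {m : (n : ℕ) → (Fin (n + 1) → 𝒳) → M n}
    (hm : ∀ n, Measurable (m n)) (n : ℕ) : Measurable (invariantStat m n) :=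
  (hm n).comp (measurable_pi_lambda _ fun _ => measurable_pi_apply _)

/-- The filtration whose `n`-th σ-algebra is generated by the statistics of index `≤ n`. -/
def invariantFiltration {𝒳 : Type*} [MeasurableSpace 𝒳] {M : ℕ → Type*}
    [∀ n, MeasurableSpace (M n)] (m : (n : ℕ) → (Fin (n + 1) → 𝒳) → M n)
    (hm : ∀ n, Measurable (m n)) :
    Filtration ℕ (MeasurableSpace.pi : MeasurableSpace (ℕ → 𝒳)) where
  seq n := ⨆ i ≤ n, MeasurableSpace.comap (invariantStat m i) inferInstance
  mono' _ _ h := biSup_mono fun _ hi => le_trans hi h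
  le' _ := iSup₂_le fun i _ => (measurable_invariantStat hm i).comap_le

/-- The likelihood ratio `(dQ^{M_n}/dP^{M_n})(M_n)` of the statistic of index `n`. -/
noncomputable def invariantLikelihoodRatio {𝒳 : Type*} [MeasurableSpace 𝒳] {M : ℕ → Type*}
    [∀ n, MeasurableSpace (M n)] (m : (n : ℕ) → (Fin (n + 1) → 𝒳) → M n)
    (P Q : Measure (ℕ → 𝒳)) (n : ℕ) (ω : ℕ → 𝒳) : ℝ :=
  ((Q.map (invariantStat m n)).rnDeriv (P.map (invariantStat m n)) (invariantStat m n ω)).toReal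

/-- The distribution of a maximal invariant is the same under all translates of a law. -/
theorem map_invariantStat_translatedLaw {G : Type*} [Group G] {𝒳 : Type*} [MeasurableSpace 𝒳]
    [MulAction G 𝒳] [MeasurableConstSMul G 𝒳] {M : ℕ → Type*} [∀ n, MeasurableSpace (M n)]
    {m : (n : ℕ) → (Fin (n + 1) → 𝒳) → M n} (hm : ∀ n, IsMaximalInvariant G (m n))
    (P : Measure (ℕ → 𝒳)) (g : G) (n : ℕ) :
    (translatedLaw P g).map (invariantStat m n) = P.map (invariantStat m n) := by
  have hg : Measurable fun ω : ℕ → 𝒳 => g • ω :=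
    measurable_pi_lambda _ fun i => (measurable_pi_apply i).const_smul g
  rw [translatedLaw, Measure.map_map (measurable_invariantStat (fun k => (hm k).measurable) n) hg]
  congr 1
  funext ω
  exact (hm n).invariant g fun i => ω i

/-!
If `(X_1, …, X_j)` and `(Y_1, …, Y_j)` lie in the same `G`-orbit, then so do their initial segments
of length `i ≤ j`. Hence `M_i` is constant on the fibres of `M_j`, and on a standard Borel space
this already makes `M_i` a measurable function of `M_j` (a consequence of Lusin's separation
theorem). So `σ(M_1, …, M_n) = σ(M_n)`, and on an event of `σ(M_n)` every `T*_k` with `k ≥ n`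
integrates to the `Q`-probability of that event, which is the martingale property. Replacing `P`
by `P_g` changes neither the laws of the `M_n` nor `T*`, so no separate argument is needed for `g`.
-/

theorem measurable_comap_of_factorsThrough {X Y Z : Type*} [MeasurableSpace X]
    [StandardBorelSpace X] [mY : MeasurableSpace Y] [MeasurableSpace.CountablySeparated Y]
    [MeasurableSpace Z] {f : X → Y} {g : X → Z} (hf : Measurable f) (hg : Measurable g)
    (hgf : g.FactorsThrough f) : Measurable[mY.comap f] g := by
  have : MeasurableSpace.CountablySeparated (Set.range f) :=
    MeasurableSpace.Subtype.countablySeparated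
  have hg_eq : (g ∘ Set.rangeSplitting f) ∘ Set.rangeFactorization f = g :=
    funext fun x => hgf (Set.apply_rangeSplitting f _)
  have h_lift : Measurable (g ∘ Set.rangeSplitting f) :=
    (hf.rangeFactorization.measurable_comp_iff_of_surjective
      Set.rangeFactorization_surjective).1 (hg_eq.symm ▸ hg)
  rw [← hg_eq]
  exact h_lift.comp (comap_measurable f).rangeFactorization

section LikelihoodRatio

variable {Ω N N' : Type*} [MeasurableSpace Ω] [mN : MeasurableSpace N] [mN' : MeasurableSpace N']
  {μ ν : Measure Ω} {T : Ω → N} {f : N → N'}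

/-- The likelihood ratio `(dν^T/dμ^T)(T)` of a statistic `T`, where `μ^T` and `ν^T` are the laws of
`T` under `μ` and `ν`. It is real-valued: the value `∞` of the density is sent to `0`. -/
noncomputable def likelihoodRatio (μ ν : Measure Ω) (T : Ω → N) (ω : Ω) : ℝ :=
  ((ν.map T).rnDeriv (μ.map T) (T ω)).toReal

theorem stronglyMeasurable_likelihoodRatio (μ ν : Measure Ω) (T : Ω → N) :
    StronglyMeasurable[mN.comap T] (likelihoodRatio μ ν T) :=
  ((Measure.measurable_rnDeriv _ _).ennreal_toReal.comp (comap_measurable T)).stronglyMeasurable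

theorem integrable_likelihoodRatio [IsFiniteMeasure ν] (hT : Measurable T) :
    Integrable (likelihoodRatio μ ν T) μ :=
  Measure.integrable_toReal_rnDeriv.comp_measurable hT

theorem setIntegral_likelihoodRatio [SigmaFinite (μ.map T)] [IsFiniteMeasure ν]
    (hT : Measurable T) (hνμ : ν.map T ≪ μ.map T) {s : Set Ω} (hs : MeasurableSet[mN.comap T] s) :
    ∫ ω in s, likelihoodRatio μ ν T ω ∂μ = ν.real s := by
  obtain ⟨t, ht, rfl⟩ := hs
  calc ∫ ω in T ⁻¹' t, likelihoodRatio μ ν T ω ∂μ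
      = ∫ y in t, ((ν.map T).rnDeriv (μ.map T) y).toReal ∂(μ.map T) :=
        (setIntegral_map ht (Measure.measurable_rnDeriv _ _).ennreal_toReal.aestronglyMeasurable
          hT.aemeasurable).symm
    _ = (ν.map T).real t := Measure.setIntegral_toReal_rnDeriv hνμ t
    _ = ν.real (T ⁻¹' t) := map_measureReal_apply hT ht

theorem integral_likelihoodRatio [SigmaFinite (μ.map T)] [IsFiniteMeasure ν]
    (hT : Measurable T) (hνμ : ν.map T ≪ μ.map T) :
    ∫ ω, likelihoodRatio μ ν T ω ∂μ = ν.real Set.univ := by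
  rw [← setIntegral_univ, setIntegral_likelihoodRatio hT hνμ MeasurableSet.univ]

theorem sigmaFinite_map_of_map_comp [hσ : SigmaFinite (μ.map (f ∘ T))] (hf : Measurable f)
    (hT : Measurable T) : SigmaFinite (μ.map T) :=
  SigmaFinite.of_map _ hf.aemeasurable (by rwa [Measure.map_map hf hT])

theorem sigmaFinite_trim_comap [hσ : SigmaFinite (μ.map T)] (hT : Measurable T) :
    SigmaFinite (μ.trim hT.comap_le) :=
  SigmaFinite.of_map _ (comap_measurable T).aemeasurable (by rwa [map_trim_comap hT])

theorem condExp_likelihoodRatio_comp [SigmaFinite (μ.map (f ∘ T))] [IsFiniteMeasure ν]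
    (hf : Measurable f) (hT : Measurable T) (hνμ : ν.map T ≪ μ.map T) :
    μ[likelihoodRatio μ ν T | mN'.comap (f ∘ T)] =ᵐ[μ] likelihoodRatio μ ν (f ∘ T) := by
  have hfT : Measurable (f ∘ T) := hf.comp hT
  have hνμf : ν.map (f ∘ T) ≪ μ.map (f ∘ T) := by
    simpa only [Measure.map_map hf hT] using hνμ.map hf
  have h_comap_le : mN'.comap (f ∘ T) ≤ mN.comap T := (hf.comp (comap_measurable T)).comap_le
  have := sigmaFinite_map_of_map_comp (μ := μ) hf hT
  have := sigmaFinite_trim_comap (μ := μ) hfT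
  refine (ae_eq_condExp_of_forall_setIntegral_eq hfT.comap_le (integrable_likelihoodRatio hT)
    (fun _ _ _ => (integrable_likelihoodRatio hfT).integrableOn) (fun s hs _ => ?_)
    (stronglyMeasurable_likelihoodRatio μ ν _).aestronglyMeasurable).symm
  rw [setIntegral_likelihoodRatio hfT hνμf hs,
    setIntegral_likelihoodRatio hT hνμ (h_comap_le s hs)]

theorem martingale_likelihoodRatio {ι : Type*} [Preorder ι] {E : ι → Type*}
    [∀ i, MeasurableSpace (E i)] {S : (i : ι) → Ω → E i} {ℱ : Filtration ι ‹MeasurableSpace Ω›}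
    [∀ i, SigmaFinite (μ.map (S i))] [IsFiniteMeasure ν] (hS : ∀ i, Measurable (S i))
    (hℱ : ∀ i, ℱ i = MeasurableSpace.comap (S i) inferInstance)
    (h_comp : ∀ i j, i ≤ j → ∃ f : E j → E i, Measurable f ∧ S i = f ∘ S j)
    (hνμ : ∀ i, ν.map (S i) ≪ μ.map (S i)) :
    Martingale (fun i => likelihoodRatio μ ν (S i)) ℱ μ := by
  refine ⟨fun i => hℱ i ▸ stronglyMeasurable_likelihoodRatio μ ν (S i), fun i j hij => ?_⟩
  obtain ⟨f, hf, hfS⟩ := h_comp i j hij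
  have : SigmaFinite (μ.map (f ∘ S j)) := hfS ▸ inferInstance
  simpa only [hℱ, ← hfS] using condExp_likelihoodRatio_comp hf (hS j) (hνμ j)

end LikelihoodRatio

theorem IsMaximalInvariant.factorsThrough_comp {G : Type*} [Group G] {𝒳 : Type*}
    [MeasurableSpace 𝒳] [MulAction G 𝒳] {ι κ N Z : Type*} [MeasurableSpace N]
    {m : (ι → 𝒳) → N} (hm : IsMaximalInvariant G m) {φ : (κ → 𝒳) → Z}
    (hφ : ∀ (g : G) (x : κ → 𝒳), φ (g • x) = φ x) (e : κ → ι) :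
    (fun x : ι → 𝒳 => φ (x ∘ e)).FactorsThrough m := by
  intro x y hxy
  obtain ⟨g, rfl⟩ := hm.maximal x y hxy
  exact (hφ g (x ∘ e)).symm

section InvariantStat

variable {G : Type*} [Group G] {𝒳 : Type*} [MeasurableSpace 𝒳] [MulAction G 𝒳]
  {M : ℕ → Type*} [∀ n, MeasurableSpace (M n)] {m : (n : ℕ) → (Fin (n + 1) → 𝒳) → M n}

theorem factorsThrough_invariantStat (hm : ∀ n, IsMaximalInvariant G (m n)) {i j : ℕ}
    (hij : i ≤ j) : (invariantStat m i).FactorsThrough (invariantStat m j) :=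
  ((hm j).factorsThrough_comp (hm i).invariant (Fin.castLE (Nat.succ_le_succ hij))).comp_right
    fun (ω : ℕ → 𝒳) k => ω k

theorem exists_measurable_invariantStat_eq_comp [StandardBorelSpace 𝒳] [Nonempty 𝒳]
    (hm : ∀ n, IsMaximalInvariant G (m n)) {i j : ℕ} [StandardBorelSpace (M i)]
    [MeasurableSpace.CountablySeparated (M j)] (hij : i ≤ j) :
    ∃ f : M j → M i, Measurable f ∧ invariantStat m i = f ∘ invariantStat m j := by
  have hmeas := measurable_invariantStat fun n => (hm n).measurable
  have : Nonempty (M i) := .map (m i) inferInstance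
  exact (measurable_comap_of_factorsThrough (hmeas j) (hmeas i)
    (factorsThrough_invariantStat hm hij)).exists_eq_measurable_comp

theorem invariantFiltration_eq_comap [StandardBorelSpace 𝒳]
    (hm : ∀ n, IsMaximalInvariant G (m n)) (n : ℕ) [MeasurableSpace.CountablySeparated (M n)] :
    invariantFiltration m (fun k => (hm k).measurable) n =
      MeasurableSpace.comap (invariantStat m n) inferInstance := by
  have hmeas := measurable_invariantStat fun k => (hm k).measurable
  refine le_antisymm (iSup₂_le fun i hi => ?_) (le_iSup₂_of_le n le_rfl le_rfl)
  exact (measurable_comap_of_factorsThrough (hmeas n) (hmeas i)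
    (factorsThrough_invariantStat hm hi)).comap_le

theorem invariantLikelihoodRatio_eq_likelihoodRatio_translatedLaw [MeasurableConstSMul G 𝒳]
    (hm : ∀ n, IsMaximalInvariant G (m n)) (P Q : Measure (ℕ → 𝒳)) (g : G) :
    invariantLikelihoodRatio m P Q =
      fun n => likelihoodRatio (translatedLaw P g) Q (invariantStat m n) := by
  funext n ω
  rw [likelihoodRatio, map_invariantStat_translatedLaw hm, invariantLikelihoodRatio]

end InvariantStat

theorem maximal_invariant_likelihood_ratio_martingale_general
    {G : Type*} [Group G] {𝒳 : Type*} [MeasurableSpace 𝒳] [StandardBorelSpace 𝒳] [Nonempty 𝒳]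
    [MulAction G 𝒳] [MeasurableConstSMul G 𝒳]
    {M : ℕ → Type*} [∀ n, MeasurableSpace (M n)] [∀ n, StandardBorelSpace (M n)]
    (m : (n : ℕ) → (Fin (n + 1) → 𝒳) → M n)
    (hm : ∀ n, IsMaximalInvariant G (m n))
    (P Q : Measure (ℕ → 𝒳)) [hP : SigmaFinite (P.map (invariantStat m 0))] [IsFiniteMeasure Q] :
    (∀ n : ℕ, ∃ f : M (n + 1) → M n, Measurable f ∧
      ∀ ω : ℕ → 𝒳, invariantStat m n ω = f (invariantStat m (n + 1) ω)) ∧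
    ((∀ n : ℕ, Q.map (invariantStat m n) ≪ P.map (invariantStat m n)) →
      ∀ g : G,
        Martingale (invariantLikelihoodRatio m P Q)
          (invariantFiltration m fun n => (hm n).measurable) (translatedLaw P g) ∧
        (∀ (n : ℕ) (ω : ℕ → 𝒳), 0 ≤ invariantLikelihoodRatio m P Q n ω) ∧
        ∀ n : ℕ, ∫ ω, invariantLikelihoodRatio m P Q n ω ∂(translatedLaw P g) =
          Q.real Set.univ) := by
  have hmeas := measurable_invariantStat fun n => (hm n).measurable
  refine ⟨fun n => ?_, fun hQP g => ?_⟩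
  · obtain ⟨f, hf, hfe⟩ := exists_measurable_invariantStat_eq_comp hm n.le_succ
    exact ⟨f, hf, congrFun hfe⟩
  simp only [← map_invariantStat_translatedLaw hm P g] at hP hQP
  rw [invariantLikelihoodRatio_eq_likelihoodRatio_translatedLaw hm P Q g]
  have hσ (n : ℕ) : SigmaFinite ((translatedLaw P g).map (invariantStat m n)) := by
    obtain ⟨f, hf, hfe⟩ := exists_measurable_invariantStat_eq_comp hm n.zero_le
    rw [hfe] at hP
    exact sigmaFinite_map_of_map_comp hf (hmeas n)
  exact ⟨martingale_likelihoodRatio hmeas (fun n => invariantFiltration_eq_comap hm n)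
      (fun _ _ => exists_measurable_invariantStat_eq_comp hm) hQP,
    fun _ _ => ENNReal.toReal_nonneg, fun n => integral_likelihoodRatio (hmeas n) (hQP n)⟩

theorem maximal_invariant_likelihood_ratio_martingale
    {G : Type*} [Group G] {𝒳 : Type*} [MeasurableSpace 𝒳] [StandardBorelSpace 𝒳]
    [MulAction G 𝒳] [MeasurableConstSMul G 𝒳]
    (P Q : Measure (ℕ → 𝒳)) [IsProbabilityMeasure P] [IsProbabilityMeasure Q]
    {M : ℕ → Type*} [∀ n, MeasurableSpace (M n)] [∀ n, StandardBorelSpace (M n)]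
    (m : (n : ℕ) → (Fin (n + 1) → 𝒳) → M n)
    (hm : ∀ n, IsMaximalInvariant G (m n)) :
    (∀ n : ℕ, ∃ f : M (n + 1) → M n, Measurable f ∧
      ∀ ω : ℕ → 𝒳, invariantStat m n ω = f (invariantStat m (n + 1) ω)) ∧
    ((∀ n : ℕ, Q.map (invariantStat m n) ≪ P.map (invariantStat m n)) →
      ∀ g : G,
        Martingale (invariantLikelihoodRatio m P Q)
          (invariantFiltration m fun n => (hm n).measurable) (translatedLaw P g) ∧
        (∀ (n : ℕ) (ω : ℕ → 𝒳), 0 ≤ invariantLikelihoodRatio m P Q n ω) ∧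
        ∀ n : ℕ, ∫ ω, invariantLikelihoodRatio m P Q n ω ∂(translatedLaw P g) = 1) := by
  have : Nonempty 𝒳 := P.nonempty_of_neZero.map (· 0)
  simpa using maximal_invariant_likelihood_ratio_martingale_general m hm P Q
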